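/- Let k be a commutative ring, φ : R → S a homomorphism of commutative k-algebras with φ(f) = g, and E = (E₁, E₀, A, B) a matrix factorization of f over R with connections ∇₀, ∇₁ on E₀, E₁. Endow the base-changed matrix factorization φ_*(E) = (E₁⊗_R S, E₀⊗_R S, A⊗1, B⊗1) of g over S with the induced connections ∇ᵢ⊗1 + 1⊗d_{S/k}. Then the Atiyah class of φ_*(E) is the base change of the Atiyah class of E: the component (E₁⊗_R S) → Ω¹_{S/k} ⊗ (E₀⊗_R S) equals (μ⊗1)∘((∇₀∘A − (1⊗A)∘∇₁)⊗1_S), and likewise in the other degree, where μ : Ω¹_{R/k}⊗_R S → Ω¹_{S/k} is the canonical map; consequently, if R and S are smooth k-algebras of the same relative dimension n and ℚ ⊆ k, then ch(φ_*(E)) = φ_*(ch(E)). -/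

import Mathlib

/-!
STATEMENT 19: Let φ : R → S be a homomorphism of commutative k-algebras with φ(f) = g,
and E = (E₁, E₀, A, B) a matrix factorization of f over R with connections ∇₀, ∇₁.
Endow the base change φ_*(E) = (E₁⊗S, E₀⊗S, A⊗1, B⊗1) with the induced connections
∇ᵢ⊗1 + 1⊗d_{S/k}.  Then the Atiyah class of φ_*(E) is the base change of the Atiyah
class of E (componentwise, via the canonical map μ : Ω¹_{R/k} → Ω¹_{S/k}); consequently,
if moreover ℚ ⊆ k and R, S are smooth k-algebras of the same relative dimension n, then
ch(φ_*(E)) = φ_*(ch(E)) (equality modulo the image of dg∧, φ_* on forms being induced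
by μ).
-/

open TensorProduct

universe u
variable (k Q : Type u) [CommRing k] [CommRing Q] [Algebra k Q]

structure Conn (k Q E : Type u) [CommRing k] [CommRing Q] [Algebra k Q]
    [AddCommGroup E] [Module Q E] where
  toFun : E → (Ω[Q⁄k] ⊗[Q] E)
  map_add : ∀ x y, toFun (x + y) = toFun x + toFun y
  leibniz : ∀ (q : Q) (x : E),
    toFun (q • x) = (KaehlerDifferential.D k Q) q ⊗ₜ[Q] x + q • toFun x

/-- `Λ•Ω¹ ⊗ (Ω¹ ⊗ E) → Λ•Ω¹ ⊗ E`, multiplying the middle one-form in from the right. -/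
noncomputable def stepMul (E : Type u) [AddCommGroup E] [Module Q E] :
    (ExteriorAlgebra Q (Ω[Q⁄k]) ⊗[Q] (Ω[Q⁄k] ⊗[Q] E)) →ₗ[Q]
      (ExteriorAlgebra Q (Ω[Q⁄k]) ⊗[Q] E) :=
  (TensorProduct.map
      (TensorProduct.lift ((LinearMap.mul Q (ExteriorAlgebra Q (Ω[Q⁄k]))).compl₂
        (ExteriorAlgebra.ι Q)))
      LinearMap.id) ∘ₗ
    (TensorProduct.assoc Q (ExteriorAlgebra Q (Ω[Q⁄k])) (Ω[Q⁄k]) E).symm.toLinearMap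

/-- `Atⁱ : E → Λ•Ω¹ ⊗ E`, composing the Atiyah class with itself `i` times and multiplying
the resulting one-forms together by the wedge product (`At⁰ = id`). -/
noncomputable def atIter (E : Type u) [AddCommGroup E] [Module Q E]
    (At : E →ₗ[Q] Ω[Q⁄k] ⊗[Q] E) :
    ℕ → (E →ₗ[Q] ExteriorAlgebra Q (Ω[Q⁄k]) ⊗[Q] E)
  | 0 => TensorProduct.mk Q (ExteriorAlgebra Q (Ω[Q⁄k])) E 1
  | (i+1) => stepMul k Q E ∘ₗ
      (LinearMap.lTensor (ExteriorAlgebra Q (Ω[Q⁄k])) At) ∘ₗ atIter E At i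

/-- Trace, with coefficients in a module `N`, of a map `E → N ⊗ E` on a f.g. projective
module `E`, computed via a presentation of `E` as a retract of `Fin r → Q`. -/
noncomputable def trC {N E : Type u} [AddCommGroup N] [Module Q N]
    [AddCommGroup E] [Module Q E] {r : ℕ}
    (p : (Fin r → Q) →ₗ[Q] E) (s : E →ₗ[Q] (Fin r → Q))
    (g : E →ₗ[Q] N ⊗[Q] E) : N :=
  ∑ j : Fin r, (TensorProduct.rid Q N)
    ((LinearMap.lTensor N (LinearMap.proj j))
      ((LinearMap.lTensor N s) (g (p (Pi.single j 1)))))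

/-- The supertrace of a map `E₀ ⊕ E₁ → N ⊗ (E₀ ⊕ E₁)`: the trace of its `(0,0)`-component
minus the trace of its `(1,1)`-component. -/
noncomputable def strT {N E₀ E₁ : Type u} [AddCommGroup N] [Module Q N]
    [AddCommGroup E₀] [Module Q E₀] [AddCommGroup E₁] [Module Q E₁]
    {r₀ r₁ : ℕ} (p₀ : (Fin r₀ → Q) →ₗ[Q] E₀) (s₀ : E₀ →ₗ[Q] (Fin r₀ → Q))
    (p₁ : (Fin r₁ → Q) →ₗ[Q] E₁) (s₁ : E₁ →ₗ[Q] (Fin r₁ → Q))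
    (T : (E₀ × E₁) →ₗ[Q] N ⊗[Q] (E₀ × E₁)) : N :=
  trC Q p₀ s₀ ((LinearMap.lTensor N (LinearMap.fst Q E₀ E₁)) ∘ₗ T ∘ₗ LinearMap.inl Q E₀ E₁)
    - trC Q p₁ s₁ ((LinearMap.lTensor N (LinearMap.snd Q E₀ E₁)) ∘ₗ T ∘ₗ LinearMap.inr Q E₀ E₁)

/-!
Every ingredient commutes with maps semilinear over `Q → S`, so the comparison never has to
extend scalars to `Ω¹ ⊗ S`. On `1 ⊗ e` the induced connection is `∇ e` transported along
`μ ⊗ (1 ⊗ -)`, whence the Atiyah class, its iterates and their components are transported too.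
The trace of a map on a projective module is the sum of a bilinear form over a dual basis, and
does not depend on the dual basis; over `S` it may thus be computed in the base change of a dual
basis over `Q`. The Chern characters therefore agree already as forms, without a correction by
a multiple of `dg`.
-/

section Semilinear

variable {R : Type*} (S : Type*) [CommRing R] [CommRing S]

/-- An `R`-linear map into an `S`-module, seen as a map semilinear over `R → S`. -/
def semilinearOfLinear [Algebra R S] {M N : Type*}
    [AddCommGroup M] [Module R M] [AddCommGroup N] [Module R N] [Module S N]
    [IsScalarTower R S N] (f : M →ₗ[R] N) : M →ₛₗ[algebraMap R S] N where
  toFun := f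
  map_add' := map_add f
  map_smul' r x := by rw [map_smul, algebraMap_smul]

/-- The unit `e ↦ 1 ⊗ e` of the adjunction between extension and restriction of scalars. -/
noncomputable def baseChangeUnit [Algebra R S] (E : Type*) [AddCommGroup E] [Module R E] :
    E →ₛₗ[algebraMap R S] S ⊗[R] E :=
  semilinearOfLinear S (TensorProduct.mk R S E 1)

@[simp]
theorem baseChangeUnit_apply [Algebra R S] {E : Type*} [AddCommGroup E] [Module R E] (e : E) :
    baseChangeUnit S E e = 1 ⊗ₜ[R] e :=
  rfl

variable {S}

/-- A ring homomorphism between algebras lying over `σ : R → S`, seen as a `σ`-semilinear map. -/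
def semilinearOfRingHom {σ : R →+* S} {Λ Λ' : Type*} [Ring Λ] [Algebra R Λ] [Ring Λ']
    [Algebra S Λ'] (Φ : Λ →+* Λ')
    (hΦ : ∀ r, Φ (algebraMap R Λ r) = algebraMap S Λ' (σ r)) : Λ →ₛₗ[σ] Λ' where
  toFun := Φ
  map_add' := map_add Φ
  map_smul' r x := by rw [Algebra.smul_def, map_mul, hΦ, ← Algebra.smul_def]

variable {σ : R →+* S} {M M' N N' P P' : Type*}
  [AddCommGroup M] [Module R M] [AddCommGroup M'] [Module S M']
  [AddCommGroup N] [Module R N] [AddCommGroup N'] [Module S N']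
  [AddCommGroup P] [Module R P] [AddCommGroup P'] [Module S P']

/-- The product of two semilinear maps; `LinearMap.prodMap` only covers linear ones. -/
def semilinearProdMap (β : M →ₛₗ[σ] M') (γ : P →ₛₗ[σ] P') : M × P →ₛₗ[σ] M' × P' where
  toFun x := (β x.1, γ x.2)
  map_add' x y := by simp
  map_smul' r x := by simp

theorem semilinearProdMap_inl (β : M →ₛₗ[σ] M') (γ : P →ₛₗ[σ] P') (x : M) :
    semilinearProdMap β γ (LinearMap.inl R M P x) = LinearMap.inl S M' P' (β x) := by
  simp [semilinearProdMap]

theorem semilinearProdMap_inr (β : M →ₛₗ[σ] M') (γ : P →ₛₗ[σ] P') (y : P) :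
    semilinearProdMap β γ (LinearMap.inr R M P y) = LinearMap.inr S M' P' (γ y) := by
  simp [semilinearProdMap]

theorem lTensor_map_of_comm (μ : N →ₛₗ[σ] N') (β : M →ₛₗ[σ] M') (γ : P →ₛₗ[σ] P')
    {T : M →ₗ[R] P} {T' : M' →ₗ[S] P'} (hT : ∀ x, T' (β x) = γ (T x)) (z : N ⊗[R] M) :
    T'.lTensor N' (TensorProduct.map μ β z) = TensorProduct.map μ γ (T.lTensor N z) := by
  have hcomp : T'.comp β = γ.comp T := LinearMap.ext hT
  rw [LinearMap.lTensor_def, LinearMap.lTensor_def, TensorProduct.map_map,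
    TensorProduct.map_map, hcomp, LinearMap.id_comp, LinearMap.comp_id]

end Semilinear

section OffDiagonal

variable {R S : Type*} [CommRing R] [CommRing S] {σ : R →+* S} {N N' E₀ E₁ E₀' E₁' : Type*}
  [AddCommGroup N] [Module R N] [AddCommGroup N'] [Module S N']
  [AddCommGroup E₀] [Module R E₀] [AddCommGroup E₁] [Module R E₁]
  [AddCommGroup E₀'] [Module S E₀'] [AddCommGroup E₁'] [Module S E₁']

/-- The odd map `E₀ ⊕ E₁ → N ⊗ (E₀ ⊕ E₁)` with components `T₀ : E₀ → N ⊗ E₁` and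
`T₁ : E₁ → N ⊗ E₀`; it assembles the total Atiyah class from its two components. -/
noncomputable def offDiagonal (T₀ : E₀ →ₗ[R] N ⊗[R] E₁) (T₁ : E₁ →ₗ[R] N ⊗[R] E₀) :
    (E₀ × E₁) →ₗ[R] N ⊗[R] (E₀ × E₁) :=
  (LinearMap.inr R E₀ E₁).lTensor N ∘ₗ T₀ ∘ₗ LinearMap.fst R E₀ E₁ +
    (LinearMap.inl R E₀ E₁).lTensor N ∘ₗ T₁ ∘ₗ LinearMap.snd R E₀ E₁

theorem offDiagonal_semilinearProdMap (μ : N →ₛₗ[σ] N') (β₀ : E₀ →ₛₗ[σ] E₀')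
    (β₁ : E₁ →ₛₗ[σ] E₁') {T₀ : E₀ →ₗ[R] N ⊗[R] E₁} {T₁ : E₁ →ₗ[R] N ⊗[R] E₀}
    {T₀' : E₀' →ₗ[S] N' ⊗[S] E₁'} {T₁' : E₁' →ₗ[S] N' ⊗[S] E₀'}
    (h₀ : ∀ x, T₀' (β₀ x) = TensorProduct.map μ β₁ (T₀ x))
    (h₁ : ∀ x, T₁' (β₁ x) = TensorProduct.map μ β₀ (T₁ x)) (x : E₀ × E₁) :
    offDiagonal T₀' T₁' (semilinearProdMap β₀ β₁ x) =
      TensorProduct.map μ (semilinearProdMap β₀ β₁) (offDiagonal T₀ T₁ x) := by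
  simp only [offDiagonal, LinearMap.add_apply, LinearMap.comp_apply, map_add,
    ← lTensor_map_of_comm μ β₁ _ fun y => (semilinearProdMap_inr β₀ β₁ y).symm,
    ← lTensor_map_of_comm μ β₀ _ fun y => (semilinearProdMap_inl β₀ β₁ y).symm, ← h₀, ← h₁]
  rfl

end OffDiagonal

section AtiyahClass

variable {k Q} {S : Type u} [CommRing S] [Algebra k S] {E F : Type u} [AddCommGroup E]
  [Module Q E] [AddCommGroup F] [Module Q F]

/-- The component `∇_F ∘ A - (1 ⊗ A) ∘ ∇_E` of the Atiyah class along `A : E → F`. It is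
linear over `Q`, the two Leibniz terms cancelling. -/
noncomputable def Conn.atiyah (nE : Conn k Q E) (nF : Conn k Q F) (A : E →ₗ[Q] F) :
    E →ₗ[Q] Ω[Q⁄k] ⊗[Q] F where
  toFun e := nF.toFun (A e) - A.lTensor (Ω[Q⁄k]) (nE.toFun e)
  map_add' x y := by
    rw [A.map_add, nF.map_add, nE.map_add, LinearMap.map_add]
    abel
  map_smul' q x := by
    rw [A.map_smul, nF.leibniz, nE.leibniz, LinearMap.map_add, LinearMap.lTensor_tmul,
      LinearMap.map_smul, RingHom.id_apply, smul_sub, add_sub_add_left_eq_sub]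

/-- A semilinear map `β` is horizontal when it carries `∇` to `∇'`, with the one-forms
transported along `μ`. For `β = (1 ⊗ -)` and `E' = S ⊗ E` the Leibniz rule then forces
`∇' = ∇ ⊗ 1 + 1 ⊗ d`, the induced connection. -/
def Conn.IsHorizontal {σ : Q →+* S} {E' : Type u} [AddCommGroup E'] [Module S E']
    (nE : Conn k Q E) (nE' : Conn k S E') (μ : Ω[Q⁄k] →ₛₗ[σ] Ω[S⁄k])
    (β : E →ₛₗ[σ] E') : Prop :=
  ∀ e, nE'.toFun (β e) = TensorProduct.map μ β (nE.toFun e)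

theorem Conn.atiyah_map {σ : Q →+* S} {E' F' : Type u} [AddCommGroup E'] [Module S E']
    [AddCommGroup F'] [Module S F'] {nE : Conn k Q E} {nF : Conn k Q F} {nE' : Conn k S E'}
    {nF' : Conn k S F'} {μ : Ω[Q⁄k] →ₛₗ[σ] Ω[S⁄k]} {β : E →ₛₗ[σ] E'} {γ : F →ₛₗ[σ] F'}
    (hβ : nE.IsHorizontal nE' μ β) (hγ : nF.IsHorizontal nF' μ γ)
    {A : E →ₗ[Q] F} {A' : E' →ₗ[S] F'} (hA : ∀ e, A' (β e) = γ (A e)) (e : E) :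
    nE'.atiyah nF' A' (β e) = TensorProduct.map μ γ (nE.atiyah nF A e) := by
  calc nE'.atiyah nF' A' (β e)
      = nF'.toFun (γ (A e)) - A'.lTensor (Ω[S⁄k]) (nE'.toFun (β e)) := by rw [← hA]; rfl
    _ = TensorProduct.map μ γ (nF.toFun (A e)) -
          TensorProduct.map μ γ (A.lTensor (Ω[Q⁄k]) (nE.toFun e)) := by
        rw [hγ, hβ, lTensor_map_of_comm μ β γ hA]
    _ = TensorProduct.map μ γ (nE.atiyah nF A e) := (map_sub _ _ _).symm

end AtiyahClass

section Iterates

variable {k Q} {S : Type u} [CommRing S] [Algebra k S] {σ : Q →+* S} {E E' : Type u}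
  [AddCommGroup E] [Module Q E] [AddCommGroup E'] [Module S E']
  {μ : Ω[Q⁄k] →ₛₗ[σ] Ω[S⁄k]} {Φ : ExteriorAlgebra Q (Ω[Q⁄k]) →+* ExteriorAlgebra S (Ω[S⁄k])}
  (hΦ : ∀ r, Φ (algebraMap Q _ r) = algebraMap S _ (σ r))
  (hμ : ∀ ω, Φ (ExteriorAlgebra.ι Q ω) = ExteriorAlgebra.ι S (μ ω)) (β : E →ₛₗ[σ] E')

include hμ

theorem stepMul_map (z : ExteriorAlgebra Q (Ω[Q⁄k]) ⊗[Q] (Ω[Q⁄k] ⊗[Q] E)) :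
    stepMul k S E' (TensorProduct.map (semilinearOfRingHom Φ hΦ) (TensorProduct.map μ β) z) =
      TensorProduct.map (semilinearOfRingHom Φ hΦ) β (stepMul k Q E z) := by
  induction z using TensorProduct.induction_on with
  | zero => simp only [map_zero]
  | add x y hx hy => simp only [map_add, hx, hy]
  | tmul a y =>
    induction y using TensorProduct.induction_on with
    | zero => simp only [TensorProduct.tmul_zero, map_zero]
    | add x y hx hy => simp only [TensorProduct.tmul_add, map_add, hx, hy]
    | tmul ω e => simp [stepMul, semilinearOfRingHom, hμ]

theorem atIter_map {At : E →ₗ[Q] Ω[Q⁄k] ⊗[Q] E} {At' : E' →ₗ[S] Ω[S⁄k] ⊗[S] E'}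
    (hAt : ∀ x, At' (β x) = TensorProduct.map μ β (At x)) (i : ℕ) (x : E) :
    atIter k S E' At' i (β x) =
      TensorProduct.map (semilinearOfRingHom Φ hΦ) β (atIter k Q E At i x) := by
  induction i with
  | zero => simp [atIter, semilinearOfRingHom]
  | succ i ih =>
    simp only [atIter, LinearMap.comp_apply, ih]
    rw [lTensor_map_of_comm _ β (TensorProduct.map μ β) hAt, stepMul_map hΦ hμ]

end Iterates

section DualBasis

open Module

variable {R : Type*} [CommRing R] {ι κ E N : Type*} [Fintype ι] [Fintype κ]
  [AddCommGroup E] [Module R E] [AddCommGroup N] [Module R N]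

/-- A dual basis of a finitely generated projective module, in the sense of the dual basis
lemma: the vectors `e i` need not be independent. -/
def IsDualBasis (ψ : ι → Dual R E) (e : ι → E) : Prop :=
  ∀ x, ∑ i, ψ i x • e i = x

theorem isDualBasis_of_retract [DecidableEq ι] {p : (ι → R) →ₗ[R] E} {s : E →ₗ[R] (ι → R)}
    (hps : ∀ x, p (s x) = x) :
    IsDualBasis (fun i => LinearMap.proj i ∘ₗ s) (fun i => p (Pi.single i 1)) := fun x =>
  calc ∑ i, s x i • p (Pi.single i 1) = p (∑ i, s x i • Pi.single i 1) := by
        simp only [map_sum, map_smul]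
    _ = x := by rw [← pi_eq_sum_univ', hps]

theorem IsDualBasis.sum_apply_eq {ψ : ι → Dual R E} {e : ι → E} {ψ' : κ → Dual R E} {e' : κ → E}
    (h : IsDualBasis ψ e) (h' : IsDualBasis ψ' e') (c : Dual R E →ₗ[R] E →ₗ[R] N) :
    ∑ i, c (ψ i) (e i) = ∑ j, c (ψ' j) (e' j) := by
  have expand (i : ι) : ψ i = ∑ j, ψ i (e' j) • ψ' j := by
    ext x
    conv_lhs => rw [← h' x]
    simp [mul_comm]
  calc ∑ i, c (ψ i) (e i) = ∑ i, ∑ j, ψ i (e' j) • c (ψ' j) (e i) := by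
        refine Finset.sum_congr rfl fun i _ => ?_
        conv_lhs => rw [expand i]
        simp
    _ = ∑ j, c (ψ' j) (∑ i, ψ i (e' j) • e i) := by
        rw [Finset.sum_comm]
        simp only [map_sum, map_smul]
    _ = ∑ j, c (ψ' j) (e' j) := by simp only [h _]

theorem IsDualBasis.baseChange (S : Type*) [CommRing S] [Algebra R S] {ψ : ι → Dual R E}
    {e : ι → E} (h : IsDualBasis ψ e) :
    IsDualBasis (fun i => (ψ i).baseChange S) (fun i => baseChangeUnit S E (e i)) := by
  intro z
  induction z using TensorProduct.induction_on with
  | zero => simp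
  | add x y hx hy => simp only [map_add, add_smul, Finset.sum_add_distrib, hx, hy]
  | tmul a x =>
    conv_rhs => rw [← h x]
    simp [TensorProduct.tmul_sum, TensorProduct.smul_tmul', TensorProduct.tmul_smul]

end DualBasis

section Trace

open Module

/-- The bilinear form `(ψ, x) ↦ (1 ⊗ ψ) (g x)`, whose value on a dual basis is the trace of
`g` with coefficients in `N`. -/
noncomputable def contract {R E N : Type*} [CommRing R] [AddCommGroup E] [Module R E]
    [AddCommGroup N] [Module R N] (g : E →ₗ[R] N ⊗[R] E) : Dual R E →ₗ[R] E →ₗ[R] N :=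
  ((LinearMap.lTensorHom N).compr₂ (TensorProduct.rid R N).toLinearMap).compl₂ g

theorem contract_map {R S : Type*} [CommRing R] [CommRing S] {σ : R →+* S} {E E' N N' : Type*}
    [AddCommGroup E] [Module R E] [AddCommGroup E'] [Module S E'] [AddCommGroup N] [Module R N]
    [AddCommGroup N'] [Module S N'] (ν : N →ₛₗ[σ] N') {β : E →ₛₗ[σ] E'}
    {g : E →ₗ[R] N ⊗[R] E} {g' : E' →ₗ[S] N' ⊗[S] E'}
    (hg : ∀ x, g' (β x) = TensorProduct.map ν β (g x))
    {ψ : Dual R E} {ψ' : Dual S E'} (hψ : ∀ x, ψ' (β x) = σ (ψ x)) (x : E) :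
    contract g' ψ' (β x) = ν (contract g ψ x) := by
  suffices h : ∀ z, TensorProduct.rid S N' (ψ'.lTensor N' (TensorProduct.map ν β z)) =
      ν (TensorProduct.rid R N (ψ.lTensor N z)) by
    simpa only [contract, LinearMap.compl₂_apply, hg] using! h (g x)
  intro z
  induction z using TensorProduct.induction_on with
  | zero => simp only [map_zero]
  | add y z hy hz => simp only [map_add, hy, hz]
  | tmul y z => simp [hψ]

variable {R S : Type u} [CommRing R] [CommRing S] [Algebra R S] {E N N' : Type u}
  [AddCommGroup E] [Module R E] [AddCommGroup N] [Module R N] [AddCommGroup N'] [Module S N']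

theorem trC_eq_sum_contract {r : ℕ} (p : (Fin r → R) →ₗ[R] E) (s : E →ₗ[R] (Fin r → R))
    (g : E →ₗ[R] N ⊗[R] E) :
    trC R p s g = ∑ j, contract g (LinearMap.proj j ∘ₗ s) (p (Pi.single j 1)) := by
  simp [trC, contract, LinearMap.lTensor_comp]

theorem trC_baseChange {r t : ℕ} {p : (Fin r → R) →ₗ[R] E} {s : E →ₗ[R] (Fin r → R)}
    (hps : ∀ x, p (s x) = x) {q : (Fin t → S) →ₗ[S] (S ⊗[R] E)}
    {v : (S ⊗[R] E) →ₗ[S] (Fin t → S)} (hqv : ∀ x, q (v x) = x)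
    (ν : N →ₛₗ[algebraMap R S] N') {g : E →ₗ[R] N ⊗[R] E}
    {g' : (S ⊗[R] E) →ₗ[S] N' ⊗[S] (S ⊗[R] E)}
    (hg : ∀ x, g' (baseChangeUnit S E x) = TensorProduct.map ν (baseChangeUnit S E) (g x)) :
    trC S q v g' = ν (trC R p s g) := by
  rw [trC_eq_sum_contract, trC_eq_sum_contract, map_sum,
    (isDualBasis_of_retract hqv).sum_apply_eq ((isDualBasis_of_retract hps).baseChange S)]
  refine Finset.sum_congr rfl fun i _ => contract_map ν hg (fun x => ?_) _
  simp [Algebra.algebraMap_eq_smul_one]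

theorem strT_baseChange {E₀ E₁ : Type u} [AddCommGroup E₀] [Module R E₀] [AddCommGroup E₁]
    [Module R E₁] {r₀ r₁ t₀ t₁ : ℕ}
    {p₀ : (Fin r₀ → R) →ₗ[R] E₀} {s₀ : E₀ →ₗ[R] (Fin r₀ → R)} (hps₀ : ∀ e, p₀ (s₀ e) = e)
    {p₁ : (Fin r₁ → R) →ₗ[R] E₁} {s₁ : E₁ →ₗ[R] (Fin r₁ → R)} (hps₁ : ∀ e, p₁ (s₁ e) = e)
    {q₀ : (Fin t₀ → S) →ₗ[S] (S ⊗[R] E₀)} {u₀ : (S ⊗[R] E₀) →ₗ[S] (Fin t₀ → S)}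
    (hqu₀ : ∀ e, q₀ (u₀ e) = e)
    {q₁ : (Fin t₁ → S) →ₗ[S] (S ⊗[R] E₁)} {u₁ : (S ⊗[R] E₁) →ₗ[S] (Fin t₁ → S)}
    (hqu₁ : ∀ e, q₁ (u₁ e) = e)
    (ν : N →ₛₗ[algebraMap R S] N') {T : (E₀ × E₁) →ₗ[R] N ⊗[R] (E₀ × E₁)}
    {T' : ((S ⊗[R] E₀) × (S ⊗[R] E₁)) →ₗ[S] N' ⊗[S] ((S ⊗[R] E₀) × (S ⊗[R] E₁))}
    (hT : ∀ x, T' (semilinearProdMap (baseChangeUnit S E₀) (baseChangeUnit S E₁) x) =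
      TensorProduct.map ν (semilinearProdMap (baseChangeUnit S E₀) (baseChangeUnit S E₁)) (T x)) :
    strT S q₀ u₀ q₁ u₁ T' = ν (strT R p₀ s₀ p₁ s₁ T) := by
  let β := semilinearProdMap (baseChangeUnit (R := R) S E₀) (baseChangeUnit (R := R) S E₁)
  have hfst (x : E₀ × E₁) :
      LinearMap.fst S _ _ (β x) = baseChangeUnit S E₀ (LinearMap.fst R E₀ E₁ x) := rfl
  have hsnd (x : E₀ × E₁) :
      LinearMap.snd S _ _ (β x) = baseChangeUnit S E₁ (LinearMap.snd R E₀ E₁ x) := rfl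
  have h₀₀ := trC_baseChange hps₀ hqu₀ ν
    (g := (LinearMap.fst R E₀ E₁).lTensor N ∘ₗ T ∘ₗ LinearMap.inl R E₀ E₁)
    (g' := (LinearMap.fst S _ _).lTensor N' ∘ₗ T' ∘ₗ LinearMap.inl S _ _) fun x => by
      simp only [LinearMap.comp_apply, ← lTensor_map_of_comm ν β _ hfst, β, ← hT,
        semilinearProdMap_inl]
  have h₁₁ := trC_baseChange hps₁ hqu₁ ν
    (g := (LinearMap.snd R E₀ E₁).lTensor N ∘ₗ T ∘ₗ LinearMap.inr R E₀ E₁)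
    (g' := (LinearMap.snd S _ _).lTensor N' ∘ₗ T' ∘ₗ LinearMap.inr S _ _) fun x => by
      simp only [LinearMap.comp_apply, ← lTensor_map_of_comm ν β _ hsnd, β, ← hT,
        semilinearProdMap_inr]
  rw [strT, strT, map_sub, h₀₀, h₁₁]

end Trace

section ChernCharacter

variable {k Q} (S : Type u) [CommRing S] [Algebra k S] [Algebra Q S] [IsScalarTower k Q S]

variable (k Q) in
/-- The pull-back `μ` of one-forms along `Q → S`, as a semilinear map. -/
noncomputable def kaehlerPullback : Ω[Q⁄k] →ₛₗ[algebraMap Q S] Ω[S⁄k] :=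
  semilinearOfLinear S (KaehlerDifferential.map k k Q S)

variable (k) in
/-- The comparison map `(μ ⊗ 1) ∘ (- ⊗ 1_S)` from `Ω¹_{Q/k} ⊗ E` to `Ω¹_{S/k} ⊗ (S ⊗ E)`. -/
noncomputable abbrev kaehlerTensorPullback (E : Type u) [AddCommGroup E] [Module Q E] :
    Ω[Q⁄k] ⊗[Q] E →ₛₗ[algebraMap Q S] Ω[S⁄k] ⊗[S] (S ⊗[Q] E) :=
  TensorProduct.map (kaehlerPullback k Q S) (baseChangeUnit S E)

theorem eq_kaehlerTensorPullback {E : Type u} [AddCommGroup E] [Module Q E]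
    {Ψ : Ω[Q⁄k] ⊗[Q] E → Ω[S⁄k] ⊗[S] (S ⊗[Q] E)} (hadd : ∀ x y, Ψ (x + y) = Ψ x + Ψ y)
    (htmul : ∀ ω e, Ψ (ω ⊗ₜ[Q] e) = KaehlerDifferential.map k k Q S ω ⊗ₜ[S] (1 ⊗ₜ[Q] e)) :
    Ψ = kaehlerTensorPullback k S E := by
  funext z
  induction z using TensorProduct.induction_on with
  | zero => rw [map_zero, ← add_eq_left (a := Ψ 0), ← hadd, add_zero]
  | add x y hx hy => rw [hadd, hx, hy, map_add]
  | tmul ω e => exact htmul ω e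

/-- The form `∑_{i ≤ n} str(Atⁱ) / i!` representing the Chern character of a module
`E₀ ⊕ E₁` with Atiyah class `At`, the supertrace being computed in the presentations
`p₀, s₀` and `p₁, s₁`. -/
noncomputable def chernForm [Algebra ℚ Q] {E₀ E₁ : Type u} [AddCommGroup E₀] [Module Q E₀]
    [AddCommGroup E₁] [Module Q E₁] {r₀ r₁ : ℕ}
    (p₀ : (Fin r₀ → Q) →ₗ[Q] E₀) (s₀ : E₀ →ₗ[Q] (Fin r₀ → Q))
    (p₁ : (Fin r₁ → Q) →ₗ[Q] E₁) (s₁ : E₁ →ₗ[Q] (Fin r₁ → Q))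
    (At : (E₀ × E₁) →ₗ[Q] Ω[Q⁄k] ⊗[Q] (E₀ × E₁)) (n : ℕ) : ExteriorAlgebra Q (Ω[Q⁄k]) :=
  ∑ i ∈ Finset.range (n + 1), algebraMap ℚ Q (1 / (i.factorial : ℚ)) •
    strT Q p₀ s₀ p₁ s₁ (atIter k Q (E₀ × E₁) At i)

variable {S}
variable [Algebra ℚ Q] [Algebra ℚ S] {E₀ E₁ : Type u} [AddCommGroup E₀] [Module Q E₀]
  [AddCommGroup E₁] [Module Q E₁] {r₀ r₁ t₀ t₁ : ℕ}
  {p₀ : (Fin r₀ → Q) →ₗ[Q] E₀} {s₀ : E₀ →ₗ[Q] (Fin r₀ → Q)} (hps₀ : ∀ e, p₀ (s₀ e) = e)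
  {p₁ : (Fin r₁ → Q) →ₗ[Q] E₁} {s₁ : E₁ →ₗ[Q] (Fin r₁ → Q)} (hps₁ : ∀ e, p₁ (s₁ e) = e)
  {q₀ : (Fin t₀ → S) →ₗ[S] (S ⊗[Q] E₀)} {u₀ : (S ⊗[Q] E₀) →ₗ[S] (Fin t₀ → S)}
  (hqu₀ : ∀ e, q₀ (u₀ e) = e)
  {q₁ : (Fin t₁ → S) →ₗ[S] (S ⊗[Q] E₁)} {u₁ : (S ⊗[Q] E₁) →ₗ[S] (Fin t₁ → S)}
  (hqu₁ : ∀ e, q₁ (u₁ e) = e)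
  {Φ : ExteriorAlgebra Q (Ω[Q⁄k]) →+* ExteriorAlgebra S (Ω[S⁄k])}
  (hΦalg : ∀ r : Q, Φ (algebraMap Q _ r) = algebraMap S _ (algebraMap Q S r))
  (hΦι : ∀ ω : Ω[Q⁄k], Φ (ExteriorAlgebra.ι Q ω) =
    ExteriorAlgebra.ι S (KaehlerDifferential.map k k Q S ω))

include hps₀ hps₁ hqu₀ hqu₁ hΦalg hΦι

theorem chernForm_baseChange
    {At : (E₀ × E₁) →ₗ[Q] Ω[Q⁄k] ⊗[Q] (E₀ × E₁)}
    {At' : ((S ⊗[Q] E₀) × (S ⊗[Q] E₁)) →ₗ[S] Ω[S⁄k] ⊗[S] ((S ⊗[Q] E₀) × (S ⊗[Q] E₁))}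
    (hAt : ∀ x, At' (semilinearProdMap (baseChangeUnit S E₀) (baseChangeUnit S E₁) x) =
      TensorProduct.map (kaehlerPullback k Q S)
        (semilinearProdMap (baseChangeUnit S E₀) (baseChangeUnit S E₁)) (At x)) (n : ℕ) :
    chernForm q₀ u₀ q₁ u₁ At' n = Φ (chernForm p₀ s₀ p₁ s₁ At n) := by
  rw [chernForm, chernForm, map_sum]
  refine Finset.sum_congr rfl fun i _ => ?_
  rw [strT_baseChange hps₀ hps₁ hqu₀ hqu₁ (semilinearOfRingHom Φ hΦalg)
      (atIter_map hΦalg hΦι _ hAt i),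
    ← (algebraMap Q S).map_rat_algebraMap]
  exact ((semilinearOfRingHom Φ hΦalg).map_smulₛₗ _ _).symm

theorem atiyah_class_and_chern_character_functorial_general
    (A : E₁ →ₗ[Q] E₀) (B : E₀ →ₗ[Q] E₁) {na0 : Conn k Q E₀} {na1 : Conn k Q E₁}
    {nb0 : Conn k S (S ⊗[Q] E₀)} {nb1 : Conn k S (S ⊗[Q] E₁)}
    (h₀ : na0.IsHorizontal nb0 (kaehlerPullback k Q S) (baseChangeUnit S E₀))
    (h₁ : na1.IsHorizontal nb1 (kaehlerPullback k Q S) (baseChangeUnit S E₁)) (n : ℕ) :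
    (∀ x, nb1.atiyah nb0 (A.baseChange S) (1 ⊗ₜ[Q] x) =
      kaehlerTensorPullback k S E₀ (na1.atiyah na0 A x)) ∧
    (∀ y, nb0.atiyah nb1 (B.baseChange S) (1 ⊗ₜ[Q] y) =
      kaehlerTensorPullback k S E₁ (na0.atiyah na1 B y)) ∧
    chernForm q₀ u₀ q₁ u₁
        (offDiagonal (nb0.atiyah nb1 (B.baseChange S)) (nb1.atiyah nb0 (A.baseChange S))) n =
      Φ (chernForm p₀ s₀ p₁ s₁ (offDiagonal (na0.atiyah na1 B) (na1.atiyah na0 A)) n) := by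
  have hA := Conn.atiyah_map h₁ h₀ (A' := A.baseChange S) (A.baseChange_tmul 1)
  have hB := Conn.atiyah_map h₀ h₁ (A' := B.baseChange S) (B.baseChange_tmul 1)
  exact ⟨hA, hB, chernForm_baseChange hps₀ hps₁ hqu₀ hqu₁ hΦalg hΦι
    (offDiagonal_semilinearProdMap _ _ _ hB hA) n⟩

end ChernCharacter

theorem atiyah_class_and_chern_character_functorial
    -- S is another k-algebra; φ = algebraMap R S is a k-algebra homomorphism
    (S : Type u) [CommRing S] [Algebra k S] [Algebra Q S] [IsScalarTower k Q S]
    [Algebra ℚ k] [Algebra ℚ Q] [Algebra ℚ S] [IsScalarTower ℚ k Q] [IsScalarTower ℚ k S]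
    -- R (named Q here) and S are smooth k-algebras of the same relative dimension n
    (n : ℕ) [Algebra.Smooth k Q] [Algebra.Smooth k S]
    (hdimR : ∀ ω : Fin (n + 1) → Ω[Q⁄k],
      (List.ofFn (fun t => ExteriorAlgebra.ι Q (ω t))).prod = 0)
    (hdimS : ∀ ω : Fin (n + 1) → Ω[S⁄k],
      (List.ofFn (fun t => ExteriorAlgebra.ι S (ω t))).prod = 0)
    -- the matrix factorization E of f over R := Q
    (E₀ E₁ : Type u) [AddCommGroup E₀] [Module Q E₀] [AddCommGroup E₁] [Module Q E₁]
    [Module.Finite Q E₀] [Module.Projective Q E₀]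
    [Module.Finite Q E₁] [Module.Projective Q E₁]
    (f : Q) (g : S) (hg : g = algebraMap Q S f)
    (A : E₁ →ₗ[Q] E₀) (B : E₀ →ₗ[Q] E₁)
    (hAB : ∀ y, A (B y) = f • y) (hBA : ∀ x, B (A x) = f • x)
    -- connections on E₀, E₁ over R
    (na0 : Conn k Q E₀) (na1 : Conn k Q E₁)
    -- the Atiyah class of E over R
    (At₁ : E₁ →ₗ[Q] Ω[Q⁄k] ⊗[Q] E₀) (At₀ : E₀ →ₗ[Q] Ω[Q⁄k] ⊗[Q] E₁)
    (hAt₁ : ∀ e, At₁ e = na0.toFun (A e) - (LinearMap.lTensor (Ω[Q⁄k]) A) (na1.toFun e))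
    (hAt₀ : ∀ e, At₀ e = na1.toFun (B e) - (LinearMap.lTensor (Ω[Q⁄k]) B) (na0.toFun e))
    (AtR : (E₀ × E₁) →ₗ[Q] Ω[Q⁄k] ⊗[Q] (E₀ × E₁))
    (hAtR : AtR = (LinearMap.lTensor (Ω[Q⁄k]) (LinearMap.inr Q E₀ E₁)) ∘ₗ At₀ ∘ₗ
          LinearMap.fst Q E₀ E₁
        + (LinearMap.lTensor (Ω[Q⁄k]) (LinearMap.inl Q E₀ E₁)) ∘ₗ At₁ ∘ₗ
          LinearMap.snd Q E₀ E₁)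
    -- the base-change comparison maps (μ ⊗ 1)∘(− ⊗ 1_S) for E₀ and E₁
    (Ψ₀ : (Ω[Q⁄k] ⊗[Q] E₀) → (Ω[S⁄k] ⊗[S] (S ⊗[Q] E₀)))
    (hΨ₀add : ∀ x y, Ψ₀ (x + y) = Ψ₀ x + Ψ₀ y)
    (hΨ₀ : ∀ (ω : Ω[Q⁄k]) (e : E₀),
      Ψ₀ (ω ⊗ₜ[Q] e) = (KaehlerDifferential.map k k Q S ω) ⊗ₜ[S] ((1 : S) ⊗ₜ[Q] e))
    (Ψ₁ : (Ω[Q⁄k] ⊗[Q] E₁) → (Ω[S⁄k] ⊗[S] (S ⊗[Q] E₁)))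
    (hΨ₁add : ∀ x y, Ψ₁ (x + y) = Ψ₁ x + Ψ₁ y)
    (hΨ₁ : ∀ (ω : Ω[Q⁄k]) (e : E₁),
      Ψ₁ (ω ⊗ₜ[Q] e) = (KaehlerDifferential.map k k Q S ω) ⊗ₜ[S] ((1 : S) ⊗ₜ[Q] e))
    -- the induced connections ∇ᵢ⊗1 + 1⊗d_{S/k} on the base-changed modules
    (nb0 : Conn k S (S ⊗[Q] E₀)) (nb1 : Conn k S (S ⊗[Q] E₁))
    (hnb0 : ∀ (s : S) (e : E₀), nb0.toFun (s ⊗ₜ[Q] e)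
      = s • Ψ₀ (na0.toFun e) + (KaehlerDifferential.D k S s) ⊗ₜ[S] ((1 : S) ⊗ₜ[Q] e))
    (hnb1 : ∀ (s : S) (e : E₁), nb1.toFun (s ⊗ₜ[Q] e)
      = s • Ψ₁ (na1.toFun e) + (KaehlerDifferential.D k S s) ⊗ₜ[S] ((1 : S) ⊗ₜ[Q] e))
    -- the Atiyah class of the base change φ_*(E) = (E₁⊗S, E₀⊗S, A⊗1, B⊗1)
    (AtS₁ : (S ⊗[Q] E₁) →ₗ[S] Ω[S⁄k] ⊗[S] (S ⊗[Q] E₀))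
    (AtS₀ : (S ⊗[Q] E₀) →ₗ[S] Ω[S⁄k] ⊗[S] (S ⊗[Q] E₁))
    (hAtS₁ : ∀ z, AtS₁ z = nb0.toFun ((LinearMap.baseChange S A) z)
      - (LinearMap.lTensor (Ω[S⁄k]) (LinearMap.baseChange S A)) (nb1.toFun z))
    (hAtS₀ : ∀ z, AtS₀ z = nb1.toFun ((LinearMap.baseChange S B) z)
      - (LinearMap.lTensor (Ω[S⁄k]) (LinearMap.baseChange S B)) (nb0.toFun z))
    (AtS : ((S ⊗[Q] E₀) × (S ⊗[Q] E₁)) →ₗ[S]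
      Ω[S⁄k] ⊗[S] ((S ⊗[Q] E₀) × (S ⊗[Q] E₁)))
    (hAtS : AtS = (LinearMap.lTensor (Ω[S⁄k]) (LinearMap.inr S (S ⊗[Q] E₀) (S ⊗[Q] E₁))) ∘ₗ
          AtS₀ ∘ₗ LinearMap.fst S (S ⊗[Q] E₀) (S ⊗[Q] E₁)
        + (LinearMap.lTensor (Ω[S⁄k]) (LinearMap.inl S (S ⊗[Q] E₀) (S ⊗[Q] E₁))) ∘ₗ
          AtS₁ ∘ₗ LinearMap.snd S (S ⊗[Q] E₀) (S ⊗[Q] E₁))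
    -- presentations as retracts of finite free modules, over R and over S
    {r₀ r₁ t₀ t₁ : ℕ}
    (p₀ : (Fin r₀ → Q) →ₗ[Q] E₀) (s₀ : E₀ →ₗ[Q] (Fin r₀ → Q)) (hps₀ : ∀ e, p₀ (s₀ e) = e)
    (p₁ : (Fin r₁ → Q) →ₗ[Q] E₁) (s₁ : E₁ →ₗ[Q] (Fin r₁ → Q)) (hps₁ : ∀ e, p₁ (s₁ e) = e)
    (q₀ : (Fin t₀ → S) →ₗ[S] (S ⊗[Q] E₀)) (u₀ : (S ⊗[Q] E₀) →ₗ[S] (Fin t₀ → S))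
    (hqu₀ : ∀ e, q₀ (u₀ e) = e)
    (q₁ : (Fin t₁ → S) →ₗ[S] (S ⊗[Q] E₁)) (u₁ : (S ⊗[Q] E₁) →ₗ[S] (Fin t₁ → S))
    (hqu₁ : ∀ e, q₁ (u₁ e) = e)
    -- φ_* on forms: the ring homomorphism of exterior algebras induced by μ
    (Φ : ExteriorAlgebra Q (Ω[Q⁄k]) →+* ExteriorAlgebra S (Ω[S⁄k]))
    (hΦalg : ∀ r : Q, Φ (algebraMap Q (ExteriorAlgebra Q (Ω[Q⁄k])) r)
      = algebraMap S (ExteriorAlgebra S (Ω[S⁄k])) (algebraMap Q S r))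
    (hΦι : ∀ ω : Ω[Q⁄k], Φ (ExteriorAlgebra.ι Q ω)
      = ExteriorAlgebra.ι S (KaehlerDifferential.map k k Q S ω)) :
    -- (1) the Atiyah class of φ_*(E) is the base change of the Atiyah class of E …
    (∀ x : E₁, AtS₁ ((1 : S) ⊗ₜ[Q] x) = Ψ₀ (At₁ x)) ∧
    (∀ y : E₀, AtS₀ ((1 : S) ⊗ₜ[Q] y) = Ψ₁ (At₀ y)) ∧
    -- (2) … and consequently ch(φ_*(E)) = φ_*(ch(E)) in H₀((Ω•, dg, n)_{ℤ/2})
    (∃ w : ExteriorAlgebra S (Ω[S⁄k]),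
      (∑ i ∈ Finset.range (n + 1), (algebraMap ℚ S (1 / (i.factorial : ℚ))) •
          strT S q₀ u₀ q₁ u₁ (atIter k S ((S ⊗[Q] E₀) × (S ⊗[Q] E₁)) AtS i))
        - Φ (∑ i ∈ Finset.range (n + 1), (algebraMap ℚ Q (1 / (i.factorial : ℚ))) •
            strT Q p₀ s₀ p₁ s₁ (atIter k Q (E₀ × E₁) AtR i))
        = ExteriorAlgebra.ι S (KaehlerDifferential.D k S g) * w) := by
  obtain ⟨rfl, rfl⟩ : Ψ₀ = kaehlerTensorPullback k S E₀ ∧ Ψ₁ = kaehlerTensorPullback k S E₁ :=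
    ⟨eq_kaehlerTensorPullback S hΨ₀add hΨ₀, eq_kaehlerTensorPullback S hΨ₁add hΨ₁⟩
  obtain ⟨rfl, rfl⟩ : At₁ = na1.atiyah na0 A ∧ At₀ = na0.atiyah na1 B :=
    ⟨LinearMap.ext hAt₁, LinearMap.ext hAt₀⟩
  obtain ⟨rfl, rfl⟩ : AtS₁ = nb1.atiyah nb0 (A.baseChange S) ∧
      AtS₀ = nb0.atiyah nb1 (B.baseChange S) := ⟨LinearMap.ext hAtS₁, LinearMap.ext hAtS₀⟩
  have h₀ : na0.IsHorizontal nb0 (kaehlerPullback k Q S) (baseChangeUnit S E₀) :=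
    fun e => by simpa using hnb0 1 e
  have h₁ : na1.IsHorizontal nb1 (kaehlerPullback k Q S) (baseChangeUnit S E₁) :=
    fun e => by simpa using hnb1 1 e
  obtain ⟨hA, hB, hch⟩ := atiyah_class_and_chern_character_functorial_general
    hps₀ hps₁ hqu₀ hqu₁ hΦalg hΦι A B h₀ h₁ n
  refine ⟨hA, hB, 0, ?_⟩
  rw [mul_zero, sub_eq_zero, hAtS, hAtR]
  exact hch
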